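/- arXiv:1201.5334 — 2 statements merged into one kernel-verified Lean document; each statement's English description precedes it below -/
import Mathlib

section
/- Improved Yanase limit for spin measurement under angular momentum conservation (units ℏ = 1): let (ℂᵐ, ξ, U, M) be a finite-dimensional measuring process for ℂ² and L₂ a Hermitian m×m matrix such that U(S_x⊗I + I⊗L₂) = (S_x⊗I + I⊗L₂)U and ML₂ = L₂M, where S_x = (1/2)·[[0,1],[1,0]]. Then there exists a unit vector ψ ∈ ℂ² such that ε(S_z; |ψ⟩⟨ψ|)²·(4 + 16·σ(L₂;|ξ⟩⟨ξ|)²) ≥ 1, where S_z = (1/2)·[[1,0],[0,−1]]. -/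
open ComplexOrder Kronecker Matrix

/-- The rank-one projection `|ξ⟩⟨ξ|` onto a vector `ξ`. -/
noncomputable def rankOneProj {m : ℕ} (ξ : Fin m → ℂ) : Matrix (Fin m) (Fin m) ℂ :=
  Matrix.vecMulVec ξ (star ξ)

/-- The partial trace over the second tensor factor. -/
noncomputable def trK {n m : ℕ} (X : Matrix (Fin n × Fin m) (Fin n × Fin m) ℂ) :
    Matrix (Fin n) (Fin n) ℂ :=
  Matrix.of fun i j => ∑ k, X (i, k) (j, k)

/-- The noise operator `N(A) = U†(I⊗M)U − A⊗I` of a measuring process. -/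
noncomputable def noiseOp {n m : ℕ} (U : Matrix (Fin n × Fin m) (Fin n × Fin m) ℂ)
    (M : Matrix (Fin m) (Fin m) ℂ) (A : Matrix (Fin n) (Fin n) ℂ) :
    Matrix (Fin n × Fin m) (Fin n × Fin m) ℂ :=
  Uᴴ * ((1 : Matrix (Fin n) (Fin n) ℂ) ⊗ₖ M) * U - A ⊗ₖ (1 : Matrix (Fin m) (Fin m) ℂ)

/-- The disturbance operator `D(B) = U†(B⊗I)U − B⊗I` of a measuring process. -/
noncomputable def distOp {n m : ℕ} (U : Matrix (Fin n × Fin m) (Fin n × Fin m) ℂ)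
    (B : Matrix (Fin n) (Fin n) ℂ) :
    Matrix (Fin n × Fin m) (Fin n × Fin m) ℂ :=
  Uᴴ * (B ⊗ₖ (1 : Matrix (Fin m) (Fin m) ℂ)) * U - B ⊗ₖ (1 : Matrix (Fin m) (Fin m) ℂ)

/-- The rms noise `ε(A;ρ) = (Tr[N(A)²(ρ⊗|ξ⟩⟨ξ|)])^{1/2}`. -/
noncomputable def rmsNoise {n m : ℕ} (U : Matrix (Fin n × Fin m) (Fin n × Fin m) ℂ)
    (M : Matrix (Fin m) (Fin m) ℂ) (ξ : Fin m → ℂ) (A ρ : Matrix (Fin n) (Fin n) ℂ) : ℝ :=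
  Real.sqrt ((noiseOp U M A * noiseOp U M A * (ρ ⊗ₖ rankOneProj ξ)).trace.re)

/-- The rms disturbance `η(B;ρ) = (Tr[D(B)²(ρ⊗|ξ⟩⟨ξ|)])^{1/2}`. -/
noncomputable def rmsDist {n m : ℕ} (U : Matrix (Fin n × Fin m) (Fin n × Fin m) ℂ)
    (ξ : Fin m → ℂ) (B ρ : Matrix (Fin n) (Fin n) ℂ) : ℝ :=
  Real.sqrt ((distOp U B * distOp U B * (ρ ⊗ₖ rankOneProj ξ)).trace.re)

/-- The standard deviation of a Hermitian matrix `C` in the state `τ`: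
`σ(C;τ)² = Tr[C²τ] − (Tr[Cτ])²`. -/
noncomputable def stddev {k : ℕ} (C τ : Matrix (Fin k) (Fin k) ℂ) : ℝ :=
  Real.sqrt ((C * C * τ).trace.re - ((C * τ).trace.re) ^ 2)

/-- The spin-1/2 `x`-component operator (ℏ = 1). -/
noncomputable def Sx : Matrix (Fin 2) (Fin 2) ℂ := !![0, 1/2; 1/2, 0]

/-- The spin-1/2 `z`-component operator (ℏ = 1). -/
noncomputable def Sz : Matrix (Fin 2) (Fin 2) ℂ := !![1/2, 0; 0, -(1/2)]

/-!
If `U` commutes with the conserved quantity `S = L₁ ⊗ 1 + 1 ⊗ L₂` and the meter `M` commutes with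
`L₂`, then `U†(1 ⊗ M)U` commutes with `S`, so the noise operator satisfies
`[N(A), S] = -[A, L₁] ⊗ 1`. Robertson's inequality for `N(A)` and `S` in the state `ψ ⊗ ξ`, together
with the additivity of the variance, gives
`|⟨[A, L₁]⟩|² ≤ 4 ε(A; ψ)² (σ(L₁; ψ)² + σ(L₂; ξ)²)`.
For `A = S_z` and `L₁ = S_x` one takes `ψ` to be an eigenvector of `S_y`, which maximises
`|⟨[S_z, S_x]⟩| = |⟨S_y⟩|`.
-/

attribute [local instance] LieRing.ofAssociativeRing

section Expectation

variable {n R : Type*} [Fintype n] [CommRing R] [StarRing R]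

/-- The expectation value `⟨v, X v⟩` of an observable `X` in the (not necessarily normalised) vector
state `v`. -/
def expectation (X : Matrix n n R) (v : n → R) : R :=
  star v ⬝ᵥ X *ᵥ v

lemma expectation_add (X Y : Matrix n n R) (v : n → R) :
    expectation (X + Y) v = expectation X v + expectation Y v := by
  simp only [expectation, add_mulVec, dotProduct_add]

lemma expectation_sub (X Y : Matrix n n R) (v : n → R) :
    expectation (X - Y) v = expectation X v - expectation Y v := by
  simp only [expectation, sub_mulVec, dotProduct_sub]

lemma expectation_neg (X : Matrix n n R) (v : n → R) :
    expectation (-X) v = -expectation X v := by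
  simp only [expectation, neg_mulVec, dotProduct_neg]

lemma expectation_smul (c : R) (X : Matrix n n R) (v : n → R) :
    expectation (c • X) v = c * expectation X v := by
  simp only [expectation, smul_mulVec, dotProduct_smul, smul_eq_mul]

lemma expectation_one [DecidableEq n] {v : n → R} (hv : star v ⬝ᵥ v = 1) :
    expectation 1 v = 1 := by
  rw [expectation, one_mulVec, hv]

lemma trace_mul_vecMulVec_star (X : Matrix n n R) (v : n → R) :
    (X * vecMulVec v (star v)).trace = expectation X v := by
  rw [mul_vecMulVec, trace_vecMulVec, dotProduct_comm, expectation]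

end Expectation

section Kronecker

variable {n m R : Type*} [CommRing R]

/-- The product vector `ψ ⊗ ξ`, indexed compatibly with the Kronecker product of matrices. -/
def kroneckerVec (ψ : n → R) (ξ : m → R) : n × m → R :=
  fun p ↦ ψ p.1 * ξ p.2

/-- The Kronecker sum `A ⊗ 1 + 1 ⊗ B`: the total amount of an additive quantity. -/
def kroneckerSum [DecidableEq n] [DecidableEq m] (A : Matrix n n R) (B : Matrix m m R) :
    Matrix (n × m) (n × m) R :=
  A ⊗ₖ (1 : Matrix m m R) + (1 : Matrix n n R) ⊗ₖ B

lemma star_kroneckerVec [StarRing R] (ψ : n → R) (ξ : m → R) :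
    star (kroneckerVec ψ ξ) = kroneckerVec (star ψ) (star ξ) :=
  funext fun _ ↦ star_mul' _ _

lemma vecMulVec_kronecker_vecMulVec {k l : Type*} (v : k → R) (w : l → R) (x : m → R)
    (y : n → R) :
    vecMulVec v w ⊗ₖ vecMulVec x y = vecMulVec (kroneckerVec v x) (kroneckerVec w y) := by
  ext
  exact mul_mul_mul_comm _ _ _ _

lemma sub_kronecker {k l m n S : Type*} [NonUnitalNonAssocRing S] (A B : Matrix k l S)
    (C : Matrix m n S) : (A - B) ⊗ₖ C = A ⊗ₖ C - B ⊗ₖ C := by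
  ext
  exact sub_mul _ _ _

lemma isHermitian_kroneckerSum [DecidableEq n] [DecidableEq m] [StarRing R]
    {A : Matrix n n R} {B : Matrix m m R} (hA : A.IsHermitian) (hB : B.IsHermitian) :
    (kroneckerSum A B).IsHermitian := by
  simp only [IsHermitian, kroneckerSum, conjTranspose_add, conjTranspose_kronecker,
    conjTranspose_one, hA.eq, hB.eq]

variable [Fintype n] [Fintype m]

lemma expectation_kronecker [StarRing R] (A : Matrix n n R) (B : Matrix m m R)
    (ψ : n → R) (ξ : m → R) :
    expectation (A ⊗ₖ B) (kroneckerVec ψ ξ) = expectation A ψ * expectation B ξ := by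
  simp only [← trace_mul_vecMulVec_star, star_kroneckerVec, ← vecMulVec_kronecker_vecMulVec,
    ← mul_kronecker_mul, trace_kronecker]

lemma star_kroneckerVec_dotProduct_self [StarRing R] {ψ : n → R} {ξ : m → R}
    (hψ : star ψ ⬝ᵥ ψ = 1) (hξ : star ξ ⬝ᵥ ξ = 1) :
    star (kroneckerVec ψ ξ) ⬝ᵥ kroneckerVec ψ ξ = 1 := by
  classical
  simpa only [one_kronecker_one, expectation, one_mulVec, hψ, hξ, mul_one] using
    expectation_kronecker 1 1 ψ ξ

variable [DecidableEq n] [DecidableEq m]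

lemma commute_one_kronecker_kroneckerSum {B M : Matrix m m R} (h : Commute M B)
    (A : Matrix n n R) : Commute ((1 : Matrix n n R) ⊗ₖ M) (kroneckerSum A B) := by
  simp only [Commute, SemiconjBy, kroneckerSum, mul_add, add_mul, ← mul_kronecker_mul, one_mul,
    mul_one, h.eq]

lemma lie_kronecker_one_kroneckerSum (X A : Matrix n n R) (B : Matrix m m R) :
    ⁅X ⊗ₖ (1 : Matrix m m R), kroneckerSum A B⁆ = ⁅X, A⁆ ⊗ₖ (1 : Matrix m m R) := by
  simp only [Ring.lie_def, kroneckerSum, mul_add, add_mul, ← mul_kronecker_mul, one_mul, mul_one,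
    sub_kronecker]
  abel

end Kronecker

section Robertson

variable {n 𝕜 : Type*} [Fintype n] [RCLike 𝕜]

open WithLp

lemma expectation_mul_eq_inner {X : Matrix n n 𝕜} (hX : X.IsHermitian) (Y : Matrix n n 𝕜)
    (v : n → 𝕜) :
    expectation (X * Y) v = inner 𝕜 (toLp 2 (X *ᵥ v)) (toLp 2 (Y *ᵥ v)) := by
  rw [EuclideanSpace.inner_toLp_toLp, dotProduct_comm, star_mulVec, hX.eq, ← dotProduct_mulVec,
    mulVec_mulVec, expectation]

lemma re_expectation_mul_self {X : Matrix n n 𝕜} (hX : X.IsHermitian) (v : n → 𝕜) :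
    RCLike.re (expectation (X * X) v) = ‖toLp 2 (X *ᵥ v)‖ ^ 2 := by
  rw [expectation_mul_eq_inner hX, inner_self_eq_norm_sq]

lemma coe_re_expectation {X : Matrix n n 𝕜} (hX : X.IsHermitian) (v : n → 𝕜) :
    (RCLike.re (expectation X v) : 𝕜) = expectation X v :=
  RCLike.conj_eq_iff_re.mp <| RCLike.conj_eq_iff_im.mpr <| hX.im_star_dotProduct_mulVec_self v

lemma sq_norm_expectation_lie_le {X Y : Matrix n n 𝕜} (hX : X.IsHermitian) (hY : Y.IsHermitian)
    (v : n → 𝕜) :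
    ‖expectation ⁅X, Y⁆ v‖ ^ 2 ≤
      4 * RCLike.re (expectation (X * X) v) * RCLike.re (expectation (Y * Y) v) := by
  set x := toLp 2 (X *ᵥ v)
  set y := toLp 2 (Y *ᵥ v)
  have cauchy_schwarz : ‖expectation ⁅X, Y⁆ v‖ ≤ 2 * (‖x‖ * ‖y‖) := calc
    ‖expectation ⁅X, Y⁆ v‖ = ‖inner 𝕜 x y - inner 𝕜 y x‖ := by
      rw [Ring.lie_def, expectation_sub, expectation_mul_eq_inner hX,
        expectation_mul_eq_inner hY]
    _ ≤ ‖inner 𝕜 x y‖ + ‖inner 𝕜 y x‖ := norm_sub_le _ _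
    _ ≤ ‖x‖ * ‖y‖ + ‖y‖ * ‖x‖ := add_le_add (norm_inner_le_norm x y) (norm_inner_le_norm y x)
    _ = 2 * (‖x‖ * ‖y‖) := by ring
  calc
    ‖expectation ⁅X, Y⁆ v‖ ^ 2 ≤ (2 * (‖x‖ * ‖y‖)) ^ 2 := by gcongr
    _ = 4 * ‖x‖ ^ 2 * ‖y‖ ^ 2 := by ring
    _ = _ := by rw [re_expectation_mul_self hX, re_expectation_mul_self hY]

/-- The variance `⟨C²⟩ - ⟨C⟩²` of an observable `C` in the vector state `v`; the real parts are
harmless for Hermitian `C`, whose moments are real. -/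
def observableVariance (C : Matrix n n 𝕜) (v : n → 𝕜) : ℝ :=
  RCLike.re (expectation (C * C) v) - RCLike.re (expectation C v) ^ 2

lemma observableVariance_eq_re_expectation [DecidableEq n] {C : Matrix n n 𝕜}
    (hC : C.IsHermitian) {v : n → 𝕜} (hv : star v ⬝ᵥ v = 1) :
    observableVariance C v = RCLike.re (expectation
      ((C - expectation C v • 1) * (C - expectation C v • 1)) v) := by
  have centred_second_moment :
      expectation ((C - expectation C v • 1) * (C - expectation C v • 1)) v =
        expectation (C * C) v - expectation C v ^ 2 := by
    simp only [mul_sub, sub_mul, smul_mul_assoc, mul_smul_comm, one_mul, mul_one,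
      expectation_sub, expectation_smul, expectation_one hv]
    ring
  rw [centred_second_moment, ← coe_re_expectation hC, map_sub, ← RCLike.ofReal_pow,
    RCLike.ofReal_re, observableVariance]

lemma isHermitian_sub_expectation [DecidableEq n] {C : Matrix n n 𝕜} (hC : C.IsHermitian)
    (v : n → 𝕜) : (C - expectation C v • 1).IsHermitian := by
  refine hC.sub ?_
  rw [← coe_re_expectation hC, IsHermitian, conjTranspose_smul, conjTranspose_one,
    RCLike.star_def, RCLike.conj_ofReal]

lemma observableVariance_nonneg {C : Matrix n n 𝕜} (hC : C.IsHermitian) {v : n → 𝕜}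
    (hv : star v ⬝ᵥ v = 1) : 0 ≤ observableVariance C v := by
  classical
  rw [observableVariance_eq_re_expectation hC hv,
    re_expectation_mul_self (isHermitian_sub_expectation hC v)]
  positivity

lemma sq_norm_expectation_lie_le_observableVariance {X Y : Matrix n n 𝕜} (hX : X.IsHermitian)
    (hY : Y.IsHermitian) {v : n → 𝕜} (hv : star v ⬝ᵥ v = 1) :
    ‖expectation ⁅X, Y⁆ v‖ ^ 2 ≤
      4 * RCLike.re (expectation (X * X) v) * observableVariance Y v := by
  classical
  have lie_centred : ⁅X, Y - expectation Y v • 1⁆ = ⁅X, Y⁆ := by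
    rw [lie_sub, ((Commute.one_right X).smul_right _).lie_eq, sub_zero]
  rw [observableVariance_eq_re_expectation hY hv, ← lie_centred]
  exact sq_norm_expectation_lie_le hX (isHermitian_sub_expectation hY v) v

lemma observableVariance_kroneckerSum [DecidableEq n] {m : Type*} [Fintype m] [DecidableEq m]
    {A : Matrix n n 𝕜} (hA : A.IsHermitian) (B : Matrix m m 𝕜) {ψ : n → 𝕜} {ξ : m → 𝕜}
    (hψ : star ψ ⬝ᵥ ψ = 1) (hξ : star ξ ⬝ᵥ ξ = 1) :
    observableVariance (kroneckerSum A B) (kroneckerVec ψ ξ) =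
      observableVariance A ψ + observableVariance B ξ := by
  simp only [observableVariance, kroneckerSum, mul_add, add_mul, ← mul_kronecker_mul, one_mul,
    mul_one, expectation_add, expectation_kronecker, expectation_one hψ, expectation_one hξ,
    map_add]
  rw [← coe_re_expectation hA, RCLike.re_ofReal_mul, RCLike.ofReal_re]
  ring

end Robertson

section Measurement

variable {n m : ℕ}

lemma stddev_rankOneProj_sq {C : Matrix (Fin n) (Fin n) ℂ} (hC : C.IsHermitian) {v : Fin n → ℂ}
    (hv : star v ⬝ᵥ v = 1) : stddev C (rankOneProj v) ^ 2 = observableVariance C v := by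
  rw [stddev, rankOneProj, trace_mul_vecMulVec_star, trace_mul_vecMulVec_star]
  exact Real.sq_sqrt (observableVariance_nonneg hC hv)

variable {U : Matrix (Fin n × Fin m) (Fin n × Fin m) ℂ} {M L₂ : Matrix (Fin m) (Fin m) ℂ}
  {A L₁ : Matrix (Fin n) (Fin n) ℂ}

lemma isHermitian_noiseOp (U : Matrix (Fin n × Fin m) (Fin n × Fin m) ℂ) (hM : M.IsHermitian)
    (hA : A.IsHermitian) : (noiseOp U M A).IsHermitian := by
  refine (isHermitian_conjTranspose_mul_mul U ?_).sub ?_ <;>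
    simp only [IsHermitian, conjTranspose_kronecker, conjTranspose_one, hM.eq, hA.eq]

lemma rmsNoise_rankOneProj_sq (U : Matrix (Fin n × Fin m) (Fin n × Fin m) ℂ)
    (hM : M.IsHermitian) (hA : A.IsHermitian) (ψ : Fin n → ℂ) (ξ : Fin m → ℂ) :
    rmsNoise U M ξ A (rankOneProj ψ) ^ 2 =
      (expectation (noiseOp U M A * noiseOp U M A) (kroneckerVec ψ ξ)).re := by
  rw [rmsNoise, rankOneProj, rankOneProj, vecMulVec_kronecker_vecMulVec,
    ← star_kroneckerVec, trace_mul_vecMulVec_star]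
  refine Real.sq_sqrt ?_
  rw [← RCLike.re_eq_complex_re, re_expectation_mul_self (isHermitian_noiseOp U hM hA)]
  positivity

lemma lie_noiseOp_kroneckerSum (hL₁ : L₁.IsHermitian) (hL₂ : L₂.IsHermitian)
    (hcons : Commute U (kroneckerSum L₁ L₂)) (hML₂ : Commute M L₂) (A : Matrix (Fin n) (Fin n) ℂ) :
    ⁅noiseOp U M A, kroneckerSum L₁ L₂⁆ = -(⁅A, L₁⁆ ⊗ₖ (1 : Matrix (Fin m) (Fin m) ℂ)) := by
  -- `U†` inherits conservation from `U` because the conserved quantity is Hermitian.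
  have hcons_adj : Commute Uᴴ (kroneckerSum L₁ L₂) := by
    simpa only [star_eq_conjTranspose, (isHermitian_kroneckerSum hL₁ hL₂).eq] using hcons.star_star
  have hmeter : Commute (Uᴴ * ((1 : Matrix (Fin n) (Fin n) ℂ) ⊗ₖ M) * U) (kroneckerSum L₁ L₂) :=
    (hcons_adj.mul_left (commute_one_kronecker_kroneckerSum hML₂ L₁)).mul_left hcons
  rw [noiseOp, sub_lie, hmeter.lie_eq, lie_kronecker_one_kroneckerSum, zero_sub]

/-- Ozawa's quantitative Wigner–Araki–Yanase theorem. -/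
theorem sq_norm_expectation_lie_le_rmsNoise_sq_mul_stddev_sq (hM : M.IsHermitian)
    (hA : A.IsHermitian) (hL₁ : L₁.IsHermitian) (hL₂ : L₂.IsHermitian)
    (hcons : Commute U (kroneckerSum L₁ L₂)) (hML₂ : Commute M L₂) {ψ : Fin n → ℂ}
    {ξ : Fin m → ℂ} (hψ : star ψ ⬝ᵥ ψ = 1) (hξ : star ξ ⬝ᵥ ξ = 1) :
    ‖expectation ⁅A, L₁⁆ ψ‖ ^ 2 ≤ 4 * rmsNoise U M ξ A (rankOneProj ψ) ^ 2 *
      (stddev L₁ (rankOneProj ψ) ^ 2 + stddev L₂ (rankOneProj ξ) ^ 2) := by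
  have robertson := sq_norm_expectation_lie_le_observableVariance (isHermitian_noiseOp U hM hA)
    (isHermitian_kroneckerSum hL₁ hL₂) (star_kroneckerVec_dotProduct_self hψ hξ)
  rwa [lie_noiseOp_kroneckerSum hL₁ hL₂ hcons hML₂, expectation_neg, norm_neg,
    expectation_kronecker, expectation_one hξ, mul_one, RCLike.re_eq_complex_re,
    ← rmsNoise_rankOneProj_sq U hM hA, observableVariance_kroneckerSum hL₁ L₂ hψ hξ,
    ← stddev_rankOneProj_sq hL₁ hψ, ← stddev_rankOneProj_sq hL₂ hξ] at robertson

end Measurement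

section Spin

/-- The unit eigenvector of `S_y` with eigenvalue `1/2`, usually written `(1, i)/√2`; the phase
`(1 + i)/√2` makes its entries Gaussian rationals. -/
noncomputable def spinYUp : Fin 2 → ℂ :=
  ![⟨1 / 2, 1 / 2⟩, ⟨-1 / 2, 1 / 2⟩]

lemma isHermitian_Sx : Sx.IsHermitian := by
  ext i j
  fin_cases i <;> fin_cases j <;> simp [Sx]

lemma isHermitian_Sz : Sz.IsHermitian := by
  ext i j
  fin_cases i <;> fin_cases j <;> simp [Sz]

lemma Sx_mul_Sx : Sx * Sx = (1 / 4 : ℂ) • 1 := by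
  ext i j
  fin_cases i <;> fin_cases j <;> norm_num [Sx, Matrix.mul_apply]

lemma star_spinYUp_dotProduct_self : star spinYUp ⬝ᵥ spinYUp = 1 := by
  norm_num [spinYUp, dotProduct, Complex.ext_iff]

lemma expectation_Sx_spinYUp : expectation Sx spinYUp = 0 := by
  norm_num [expectation, Sx, spinYUp, dotProduct, mulVec, Complex.ext_iff]

lemma observableVariance_Sx_spinYUp : observableVariance Sx spinYUp = 1 / 4 := by
  simp [observableVariance, expectation_Sx_spinYUp, Sx_mul_Sx, expectation_smul,
    expectation_one star_spinYUp_dotProduct_self]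

lemma expectation_lie_Sz_Sx_spinYUp : expectation ⁅Sz, Sx⁆ spinYUp = Complex.I / 2 := by
  norm_num [expectation, Ring.lie_def, Sx, Sz, spinYUp, dotProduct, mulVec, Complex.ext_iff]

end Spin

theorem improved_yanase_limit_general {m : ℕ}
    (ξ : Fin m → ℂ) (hξ : star ξ ⬝ᵥ ξ = 1)
    (U : Matrix (Fin 2 × Fin m) (Fin 2 × Fin m) ℂ)
    (M : Matrix (Fin m) (Fin m) ℂ) (hM : M.IsHermitian)
    (L₂ : Matrix (Fin m) (Fin m) ℂ) (hL₂ : L₂.IsHermitian)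
    (hcons : U * (Sx ⊗ₖ (1 : Matrix (Fin m) (Fin m) ℂ)
        + (1 : Matrix (Fin 2) (Fin 2) ℂ) ⊗ₖ L₂)
      = (Sx ⊗ₖ (1 : Matrix (Fin m) (Fin m) ℂ)
        + (1 : Matrix (Fin 2) (Fin 2) ℂ) ⊗ₖ L₂) * U)
    (hML₂ : M * L₂ = L₂ * M) :
    ∃ ψ : Fin 2 → ℂ, star ψ ⬝ᵥ ψ = 1 ∧
      rmsNoise U M ξ Sz (rankOneProj ψ) ^ 2 *
          (4 + 16 * stddev L₂ (rankOneProj ξ) ^ 2) ≥ 1 := by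
  refine ⟨spinYUp, star_spinYUp_dotProduct_self, ?_⟩
  have noise_bound := sq_norm_expectation_lie_le_rmsNoise_sq_mul_stddev_sq hM isHermitian_Sz
    isHermitian_Sx hL₂ hcons hML₂ star_spinYUp_dotProduct_self hξ
  have commutator_norm : ‖expectation ⁅Sz, Sx⁆ spinYUp‖ = 1 / 2 := by
    rw [expectation_lie_Sz_Sx_spinYUp, norm_div, Complex.norm_I, RCLike.norm_ofNat]
  rw [commutator_norm, stddev_rankOneProj_sq isHermitian_Sx star_spinYUp_dotProduct_self,
    observableVariance_Sx_spinYUp] at noise_bound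
  linarith

/-- Improved Yanase limit for spin measurement under angular momentum conservation. -/
theorem improved_yanase_limit {m : ℕ} (hm : 0 < m)
    (ξ : Fin m → ℂ) (hξ : star ξ ⬝ᵥ ξ = 1)
    (U : Matrix (Fin 2 × Fin m) (Fin 2 × Fin m) ℂ)
    (hU : U * Uᴴ = 1) (hU' : Uᴴ * U = 1)
    (M : Matrix (Fin m) (Fin m) ℂ) (hM : M.IsHermitian)
    (L₂ : Matrix (Fin m) (Fin m) ℂ) (hL₂ : L₂.IsHermitian)
    (hcons : U * (Sx ⊗ₖ (1 : Matrix (Fin m) (Fin m) ℂ)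
        + (1 : Matrix (Fin 2) (Fin 2) ℂ) ⊗ₖ L₂)
      = (Sx ⊗ₖ (1 : Matrix (Fin m) (Fin m) ℂ)
        + (1 : Matrix (Fin 2) (Fin 2) ℂ) ⊗ₖ L₂) * U)
    (hML₂ : M * L₂ = L₂ * M) :
    ∃ ψ : Fin 2 → ℂ, star ψ ⬝ᵥ ψ = 1 ∧
      rmsNoise U M ξ Sz (rankOneProj ψ) ^ 2 *
          (4 + 16 * stddev L₂ (rankOneProj ξ) ^ 2) ≥ 1 :=
  improved_yanase_limit_general ξ hξ U M hM L₂ hL₂ hcons hML₂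
end

section
/- The rms disturbance of a measuring process is determined by its nonselective operation: let (ℂᵐ, ξ, U, M) be a finite-dimensional measuring process for ℂⁿ, and define the linear map T on n×n complex matrices by T(X) = Tr_K[U(X⊗|ξ⟩⟨ξ|)U†]. Then for every Hermitian n×n matrix B and every density matrix ρ on ℂⁿ, η(B;ρ)² = Tr[B²·T(ρ)] − Tr[B·T(ρB)] − Tr[B·T(Bρ)] + Tr[B²ρ]. -/
open ComplexOrder Kronecker Matrix

/-- The nonselective operation `T(X) = Tr_K[U(X⊗|ξ⟩⟨ξ|)U†]` of a measuring process. -/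
noncomputable def nonselOp {n m : ℕ} (U : Matrix (Fin n × Fin m) (Fin n × Fin m) ℂ)
    (ξ : Fin m → ℂ) (X : Matrix (Fin n) (Fin n) ℂ) : Matrix (Fin n) (Fin n) ℂ :=
  trK (U * (X ⊗ₖ rankOneProj ξ) * Uᴴ)

/-!
Write `V = U†(B⊗I)U`, `C = B⊗I` and `P = |ξ⟩⟨ξ|`, so that `D(B) = V − C`. Expanding the square gives
`Tr[D(B)²(ρ⊗P)] = Tr[V²(ρ⊗P)] − Tr[V(ρ⊗P)C] − Tr[VC(ρ⊗P)] + Tr[C²(ρ⊗P)]`.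
Here `V² = U†(B²⊗I)U` by unitarity, `(ρ⊗P)C = ρB⊗P` and `C(ρ⊗P) = Bρ⊗P`, so the duality
`Tr[U†(A⊗I)U(X⊗P)] = Tr[A·T(X)]` identifies the first three terms, while `Tr P = 1` gives the last.
The argument of the square root in `η` is nonnegative because `D(B)` is Hermitian and `ρ⊗P` is
positive semidefinite.
-/

theorem conj_mul_of_mul_eq_one {M : Type*} [Monoid M] {u v : M} (huv : u * v = 1) (a b : M) :
    v * (a * b) * u = v * a * u * (v * b * u) := by
  simp only [mul_assoc, ← mul_assoc u v, huv, one_mul]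

section Trace

variable {ι : Type*} [Fintype ι]

theorem trace_sub_mul_sub_mul {R : Type*} [CommRing R] (V C S : Matrix ι ι R) :
    ((V - C) * (V - C) * S).trace =
      (V * V * S).trace - (V * (S * C)).trace - (V * (C * S)).trace + (C * C * S).trace := by
  have hcycle : (C * V * S).trace = (V * (S * C)).trace := by
    rw [← Matrix.mul_assoc, ← trace_mul_cycle]
  simp only [Matrix.sub_mul, Matrix.mul_sub, trace_sub, hcycle, ← Matrix.mul_assoc V C S]
  ring

theorem trace_mul_self_mul_nonneg {𝕜 : Type*} [RCLike 𝕜] {A S : Matrix ι ι 𝕜}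
    (hA : A.IsHermitian) (hS : S.PosSemidef) : 0 ≤ (A * A * S).trace := by
  have hASA : (A * S * A).PosSemidef := by
    simpa only [hA.eq] using hS.mul_mul_conjTranspose_same A
  simpa only [trace_mul_cycle A S A] using hASA.trace_nonneg

end Trace

section Disturbance

variable {n m : ℕ}

theorem trace_rankOneProj (ξ : Fin m → ℂ) : (rankOneProj ξ).trace = star ξ ⬝ᵥ ξ := by
  rw [rankOneProj, trace_vecMulVec, dotProduct_comm]

theorem posSemidef_rankOneProj (ξ : Fin m → ℂ) : (rankOneProj ξ).PosSemidef :=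
  posSemidef_vecMulVec_self_star ξ

theorem trace_mul_trK (A : Matrix (Fin n) (Fin n) ℂ)
    (X : Matrix (Fin n × Fin m) (Fin n × Fin m) ℂ) :
    (A * trK X).trace = ((A ⊗ₖ (1 : Matrix (Fin m) (Fin m) ℂ)) * X).trace := by
  simp only [trace, diag, mul_apply, trK, of_apply, kroneckerMap_apply, Fintype.sum_prod_type,
    one_apply, mul_ite, mul_one, mul_zero, ite_mul, zero_mul, Finset.sum_ite_eq, Finset.mem_univ,
    if_true, Finset.mul_sum]
  exact Finset.sum_congr rfl fun _ _ ↦ Finset.sum_comm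

variable (U : Matrix (Fin n × Fin m) (Fin n × Fin m) ℂ)

theorem trace_mul_nonselOp (ξ : Fin m → ℂ) (A X : Matrix (Fin n) (Fin n) ℂ) :
    (A * nonselOp U ξ X).trace =
      (Uᴴ * (A ⊗ₖ (1 : Matrix (Fin m) (Fin m) ℂ)) * U * (X ⊗ₖ rankOneProj ξ)).trace := by
  rw [nonselOp, trace_mul_trK, ← Matrix.mul_assoc, trace_mul_comm]
  simp only [Matrix.mul_assoc]

theorem isHermitian_distOp {B : Matrix (Fin n) (Fin n) ℂ} (hB : B.IsHermitian) :
    (distOp U B).IsHermitian := by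
  have hBI : (B ⊗ₖ (1 : Matrix (Fin m) (Fin m) ℂ)).IsHermitian := by
    rw [IsHermitian, conjTranspose_kronecker, hB.eq, conjTranspose_one]
  exact (isHermitian_conjTranspose_mul_mul U hBI).sub hBI

theorem sq_rmsDist (ξ : Fin m → ℂ) {B ρ : Matrix (Fin n) (Fin n) ℂ} (hB : B.IsHermitian)
    (hρ : ρ.PosSemidef) :
    rmsDist U ξ B ρ ^ 2 = (distOp U B * distOp U B * (ρ ⊗ₖ rankOneProj ξ)).trace.re :=
  Real.sq_sqrt (Complex.nonneg_iff.mp (trace_mul_self_mul_nonneg (isHermitian_distOp U hB)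
    (hρ.kronecker (posSemidef_rankOneProj ξ)))).1

variable {U}

theorem trace_distOp_mul_self_mul (hU : U * Uᴴ = 1) {ξ : Fin m → ℂ} (hξ : star ξ ⬝ᵥ ξ = 1)
    (B ρ : Matrix (Fin n) (Fin n) ℂ) :
    (distOp U B * distOp U B * (ρ ⊗ₖ rankOneProj ξ)).trace =
      (B * B * nonselOp U ξ ρ).trace - (B * nonselOp U ξ (ρ * B)).trace
        - (B * nonselOp U ξ (B * ρ)).trace + (B * B * ρ).trace := by
  set P := rankOneProj ξ
  set C : Matrix (Fin n × Fin m) (Fin n × Fin m) ℂ := B ⊗ₖ 1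
  set V := Uᴴ * C * U
  have hCC : (B * B) ⊗ₖ (1 : Matrix (Fin m) (Fin m) ℂ) = C * C := by
    rw [← mul_kronecker_mul, Matrix.one_mul]
  have hVV : (V * V * (ρ ⊗ₖ P)).trace = (B * B * nonselOp U ξ ρ).trace := by
    rw [trace_mul_nonselOp, hCC, conj_mul_of_mul_eq_one hU]
  have hVρC : (V * ((ρ ⊗ₖ P) * C)).trace = (B * nonselOp U ξ (ρ * B)).trace := by
    rw [trace_mul_nonselOp, ← mul_kronecker_mul, Matrix.mul_one]
  have hVCρ : (V * (C * (ρ ⊗ₖ P))).trace = (B * nonselOp U ξ (B * ρ)).trace := by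
    rw [trace_mul_nonselOp, ← mul_kronecker_mul, Matrix.one_mul]
  have hCCρ : (C * C * (ρ ⊗ₖ P)).trace = (B * B * ρ).trace := by
    rw [← hCC, ← mul_kronecker_mul, Matrix.one_mul, trace_kronecker, trace_rankOneProj, hξ, mul_one]
  rw [distOp, trace_sub_mul_sub_mul, hVV, hVρC, hVCρ, hCCρ]

theorem rmsDist_eq_operation_general (hU : U * Uᴴ = 1) {ξ : Fin m → ℂ} (hξ : star ξ ⬝ᵥ ξ = 1)
    {B ρ : Matrix (Fin n) (Fin n) ℂ} (hB : B.IsHermitian) (hρ : ρ.PosSemidef) :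
    rmsDist U ξ B ρ ^ 2 =
      (B * B * nonselOp U ξ ρ).trace.re
        - (B * nonselOp U ξ (ρ * B)).trace.re
        - (B * nonselOp U ξ (B * ρ)).trace.re
        + (B * B * ρ).trace.re := by
  rw [sq_rmsDist U ξ hB hρ, trace_distOp_mul_self_mul hU hξ]
  simp only [Complex.add_re, Complex.sub_re]

end Disturbance

/-- The rms disturbance of a measuring process is determined by its
nonselective operation. -/
theorem rmsDist_eq_operation {n m : ℕ} (hn : 0 < n) (hm : 0 < m)
    (ξ : Fin m → ℂ) (hξ : star ξ ⬝ᵥ ξ = 1)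
    (U : Matrix (Fin n × Fin m) (Fin n × Fin m) ℂ)
    (hU : U * Uᴴ = 1) (hU' : Uᴴ * U = 1)
    (M : Matrix (Fin m) (Fin m) ℂ) (hM : M.IsHermitian)
    (B : Matrix (Fin n) (Fin n) ℂ) (hB : B.IsHermitian)
    (ρ : Matrix (Fin n) (Fin n) ℂ) (hρ : ρ.PosSemidef) (hρtr : ρ.trace = 1) :
    rmsDist U ξ B ρ ^ 2 =
      (B * B * nonselOp U ξ ρ).trace.re
        - (B * nonselOp U ξ (ρ * B)).trace.re
        - (B * nonselOp U ξ (B * ρ)).trace.re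
        + (B * B * ρ).trace.re := by
  exact rmsDist_eq_operation_general hU hξ hB hρ
end
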